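/- Let ρ be a density matrix with entropy E and spectral constants α and β as in the context, and assume α > 0. Then for every real r > 0 there exist constants δ_r < 1, C > 0 and n₀ ∈ ℕ such that for all n ≥ n₀, 𝒮(ρ^{⊗n}, δ_r) > C · 2^{nE + r·α√n}. -/

import Mathlib

/-!
By unitary invariance `ρ^{⊗n}` may be taken diagonal, with the weights `∏ₖ p (i k)` of the product
distribution `pⁿ` on its diagonal. Put `t = n E + r α √n` and let `S` be the set of sequences of
information content `∑ₖ -log₂ p (i k) < t`. Every sequence outside `S` has weight at most
`2 ^ (-t)`, so a projection of rank `m` captures at most `m * 2 ^ (-t) + pⁿ(S)` of the trace. By the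
central limit theorem for the i.i.d. information contents of the letters, `limsup pⁿ(S) ≤ Φ(r) < 1`,
where `Φ` is the standard normal distribution function, whence `m ≥ (δ - Φ(r) - o(1)) * 2 ^ t`.
-/

open scoped BigOperators Classical ComplexOrder

/-- A density matrix: positive semidefinite with trace one. -/
def IsDensity {ι : Type*} [Fintype ι] [DecidableEq ι] (ρ : Matrix ι ι ℂ) : Prop :=
  ρ.PosSemidef ∧ ρ.trace = 1

/-- The trace distance `D(ρ,σ) = Tr|ρ−σ|`: the sum of the absolute values of the
eigenvalues of the Hermitian matrix `ρ − σ` (no factor 1/2). -/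
noncomputable def traceDist {ι : Type*} [Fintype ι] [DecidableEq ι]
    (ρ σ : Matrix ι ι ℂ) : ℝ :=
  if h : (ρ - σ).IsHermitian then ∑ i, |h.eigenvalues i| else 0

/-- The minimal dimension `𝒮(ρ,δ)` of a `δ`-significant subspace: the minimum rank of an
orthogonal projection `P` (`P = Pᴴ = P²`) with `Tr(Pρ) ≥ δ`. -/
noncomputable def sigDim {ι : Type*} [Fintype ι] [DecidableEq ι]
    (ρ : Matrix ι ι ℂ) (δ : ℝ) : ℕ :=
  sInf {m : ℕ | ∃ P : Matrix ι ι ℂ,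
    P.IsHermitian ∧ P * P = P ∧ δ ≤ ((P * ρ).trace).re ∧ P.rank = m}

/-- The `n`-fold Kronecker power of `ρ`, indexed by `Fin n → ι`. -/
noncomputable def kronPow {ι : Type*} (ρ : Matrix ι ι ℂ) (n : ℕ) :
    Matrix (Fin n → ι) (Fin n → ι) ℂ :=
  Matrix.of fun i j => ∏ k, ρ (i k) (j k)

/-- The rank-one matrix `|u⟩⟨u|`. -/
noncomputable def outer {ι : Type*} (u : ι → ℂ) : Matrix ι ι ℂ :=
  Matrix.of fun i j => u i * starRingEnd ℂ (u j)

/-- The partial trace over the second subsystem. -/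
noncomputable def ptraceB {A B : Type*} [Fintype B]
    (M : Matrix (A × B) (A × B) ℂ) : Matrix A A ℂ :=
  Matrix.of fun a a' => ∑ b, M (a, b) (a', b)

section Projection

variable {m 𝕜 : Type*} [Fintype m]

theorem trace_eq_rank_of_isIdempotentElem {K : Type*} [Field K] {P : Matrix m m K}
    (hP : IsIdempotentElem P) : P.trace = P.rank := by
  classical
  have hlin : IsIdempotentElem P.toLin' := hP.map Matrix.toLinAlgEquiv'
  rw [← Matrix.trace_toLin'_eq, (LinearMap.IsIdempotentElem.isProj_range _ hlin).trace]
  rfl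

variable [RCLike 𝕜] {P : Matrix m m 𝕜}

open scoped MatrixOrder in
theorem re_diag_nonneg_of_isStarProjection (hP : IsStarProjection P) (i : m) :
    0 ≤ RCLike.re (P i i) := by
  classical
  exact (RCLike.nonneg_iff.1 (Matrix.nonneg_iff_posSemidef.1 hP.nonneg).diag_nonneg).1

theorem re_diag_le_one_of_isStarProjection (hP : IsStarProjection P) (i : m) :
    RCLike.re (P i i) ≤ 1 := by
  classical
  simpa using re_diag_nonneg_of_isStarProjection hP.one_sub i

theorem re_trace_mul_diagonal_le [DecidableEq m] (hP : IsStarProjection P) {d : m → ℝ}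
    (hd : ∀ i, 0 ≤ d i) {b : ℝ} (hb : 0 ≤ b) {S : Finset m} (hdb : ∀ i ∉ S, d i ≤ b) :
    RCLike.re (P * Matrix.diagonal fun i ↦ (d i : 𝕜)).trace ≤ b * P.rank + ∑ i ∈ S, d i := by
  have hrank : (P.rank : ℝ) = ∑ i, RCLike.re (P i i) := by
    simpa [Matrix.trace] using
      (congrArg RCLike.re (trace_eq_rank_of_isIdempotentElem hP.isIdempotentElem)).symm
  have hentry (i : m) :
      RCLike.re (P i i) * d i ≤ b * RCLike.re (P i i) + if i ∈ S then d i else 0 := by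
    have h₀ := re_diag_nonneg_of_isStarProjection hP i
    split_ifs with hi
    · exact (mul_le_of_le_one_left (hd i) (re_diag_le_one_of_isStarProjection hP i)).trans
        (le_add_of_nonneg_left (mul_nonneg hb h₀))
    · rw [add_zero, mul_comm b]
      exact mul_le_mul_of_nonneg_left (hdb i hi) h₀
  calc RCLike.re (P * Matrix.diagonal fun i ↦ (d i : 𝕜)).trace
      = ∑ i, RCLike.re (P i i) * d i := by
        simp [Matrix.trace, Matrix.mul_diagonal]
    _ ≤ ∑ i, (b * RCLike.re (P i i) + if i ∈ S then d i else 0) :=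
        Finset.sum_le_sum fun i _ ↦ hentry i
    _ = b * P.rank + ∑ i ∈ S, d i := by
        rw [Finset.sum_add_distrib, ← Finset.mul_sum, ← hrank, Finset.sum_ite_mem,
          Finset.univ_inter]

end Projection

section SigDim

variable {m : Type*} [Fintype m] [DecidableEq m]

theorem exists_isStarProjection_rank_eq_sigDim {ρ : Matrix m m ℂ} {δ : ℝ} (hδ : δ ≤ ρ.trace.re) :
    ∃ P : Matrix m m ℂ, IsStarProjection P ∧ δ ≤ (P * ρ).trace.re ∧ P.rank = sigDim ρ δ := by
  obtain ⟨P, hP, hPP, hδP, hrank⟩ := Nat.sInf_mem (s := {k : ℕ | ∃ P : Matrix m m ℂ,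
      P.IsHermitian ∧ P * P = P ∧ δ ≤ ((P * ρ).trace).re ∧ P.rank = k})
    ⟨_, 1, Matrix.isHermitian_one, one_mul 1, by rwa [one_mul], rfl⟩
  exact ⟨P, ⟨hPP, hP⟩, hδP, hrank⟩

theorem sigDim_unitary_conj {U : Matrix m m ℂ} (hU : U ∈ Matrix.unitaryGroup m ℂ)
    (ρ : Matrix m m ℂ) (δ : ℝ) : sigDim (U * ρ * star U) δ = sigDim ρ δ := by
  let φ := Unitary.conjStarAlgAut ℂ (Matrix m m ℂ) ⟨U, hU⟩
  have hrank (P : Matrix m m ℂ) : (φ P).rank = P.rank := by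
    have hdet {V : Matrix m m ℂ} (hV : V ∈ Matrix.unitaryGroup m ℂ) : IsUnit V.det :=
      (Matrix.isUnit_iff_isUnit_det V).1 (Unitary.toUnits ⟨V, hV⟩).isUnit
    rw [Unitary.conjStarAlgAut_apply, Matrix.rank_mul_eq_left_of_isUnit_det _ _
      (hdet (Unitary.star_mem hU)), Matrix.rank_mul_eq_right_of_isUnit_det _ _ (hdet hU)]
  have hφ (k : ℕ) (P : Matrix m m ℂ) :
      P.IsHermitian ∧ P * P = P ∧ δ ≤ (P * ρ).trace.re ∧ P.rank = k ↔
        (φ P).IsHermitian ∧ φ P * φ P = φ P ∧ δ ≤ (φ P * φ ρ).trace.re ∧ (φ P).rank = k := by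
    rw [Matrix.IsHermitian, Matrix.IsHermitian, ← Matrix.star_eq_conjTranspose,
      ← Matrix.star_eq_conjTranspose, ← map_star, ← map_mul, ← map_mul,
      EmbeddingLike.apply_eq_iff_eq, EmbeddingLike.apply_eq_iff_eq, Matrix.trace_map, hrank]
  exact congrArg sInf (Set.ext fun k ↦ (φ.toEquiv.exists_congr (hφ k)).symm)

theorem le_mul_sigDim_diagonal_add_sum {d : m → ℝ} (hd : ∀ i, 0 ≤ d i) {δ : ℝ}
    (hδ : δ ≤ ∑ i, d i) {b : ℝ} (hb : 0 ≤ b) {S : Finset m} (hdb : ∀ i ∉ S, d i ≤ b) :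
    δ ≤ b * sigDim (Matrix.diagonal fun i ↦ (d i : ℂ)) δ + ∑ i ∈ S, d i := by
  obtain ⟨P, hP, hδP, hrank⟩ := exists_isStarProjection_rank_eq_sigDim
    (ρ := Matrix.diagonal fun i ↦ (d i : ℂ)) (δ := δ) (by simpa [Matrix.trace_diagonal] using hδ)
  rw [← hrank]
  exact hδP.trans (re_trace_mul_diagonal_le hP hd hb hdb)

end SigDim

section KronPow

variable {ι : Type*}

theorem kronPow_mul [Fintype ι] (A B : Matrix ι ι ℂ) (n : ℕ) :
    kronPow (A * B) n = kronPow A n * kronPow B n := by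
  ext i j
  simp only [kronPow, Matrix.of_apply, Matrix.mul_apply, Finset.prod_univ_sum,
    Finset.prod_mul_distrib, Fintype.piFinset_univ]

theorem kronPow_star (A : Matrix ι ι ℂ) (n : ℕ) : kronPow (star A) n = star (kronPow A n) := by
  ext i j
  simp [kronPow, Matrix.star_apply]

variable [DecidableEq ι]

theorem kronPow_diagonal (d : ι → ℂ) (n : ℕ) :
    kronPow (Matrix.diagonal d) n = Matrix.diagonal fun i : Fin n → ι ↦ ∏ k, d (i k) := by
  ext i j
  simp only [kronPow, Matrix.of_apply, Matrix.diagonal_apply]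
  split_ifs with h
  · simp [h]
  · obtain ⟨k, hk⟩ := Function.ne_iff.1 h
    exact Finset.prod_eq_zero (Finset.mem_univ k) (if_neg hk)

theorem kronPow_one (n : ℕ) : kronPow (1 : Matrix ι ι ℂ) n = 1 := by
  rw [← Matrix.diagonal_one, kronPow_diagonal]
  simp

variable [Fintype ι]

theorem kronPow_mem_unitaryGroup {U : Matrix ι ι ℂ} (hU : U ∈ Matrix.unitaryGroup ι ℂ) (n : ℕ) :
    kronPow U n ∈ Matrix.unitaryGroup (Fin n → ι) ℂ := by
  rw [Matrix.mem_unitaryGroup_iff, ← kronPow_star, ← kronPow_mul,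
    Matrix.mem_unitaryGroup_iff.1 hU, kronPow_one]

theorem sigDim_kronPow_eq_sigDim_diagonal {ρ : Matrix ι ι ℂ} (hρ : ρ.IsHermitian) (n : ℕ)
    (δ : ℝ) :
    sigDim (kronPow ρ n) δ =
      sigDim (Matrix.diagonal fun i : Fin n → ι ↦ ((∏ k, hρ.eigenvalues (i k) : ℝ) : ℂ)) δ := by
  conv_lhs => rw [hρ.spectral_theorem, Unitary.conjStarAlgAut_apply, kronPow_mul,
    kronPow_mul, kronPow_star, kronPow_diagonal,
    sigDim_unitary_conj (kronPow_mem_unitaryGroup hρ.eigenvectorUnitary.2 n)]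
  simp

end KronPow

section Probability

open MeasureTheory ProbabilityTheory Filter

theorem cdf_gaussianReal_lt_one (m : ℝ) {v : NNReal} (hv : v ≠ 0) (t : ℝ) :
    cdf (gaussianReal m v) t < 1 := by
  have hpos : (gaussianReal m v).real (Set.Iic t)ᶜ ≠ 0 := by
    rw [Set.compl_Iic, measureReal_ne_zero_iff]
    intro h
    simpa using gaussianReal_absolutelyContinuous' m hv h
  rw [probReal_compl_eq_one_sub measurableSet_Iic, ← cdf_eq_real] at hpos
  exact (cdf_le_one _ t).lt_of_ne fun h ↦ hpos (sub_eq_zero.2 h.symm)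

theorem hasLaw_sqrt_mul_gaussianReal (v : NNReal) :
    HasLaw (√v * ·) (gaussianReal 0 v) (gaussianReal 0 1) := by
  convert! gaussianReal_const_mul .id √v
  · simp
  · ext
    simp

variable {Ω : Type*} [MeasurableSpace Ω] {P : Measure Ω} [IsProbabilityMeasure P]
  {X : ℕ → Ω → ℝ}

theorem ae_sum_eq_mul_integral_of_variance_eq_zero (hX : MemLp (X 0) 2 P)
    (hident : ∀ k, IdentDistrib (X k) (X 0) P P) (hvar : Var[X 0; P] = 0) (n : ℕ) :
    ∀ᵐ ω ∂P, ∑ k ∈ Finset.range n, X k ω = n * P[X 0] := by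
  have hconst (k : ℕ) : ∀ᵐ ω ∂P, X k ω = P[X 0] :=
    (hident k).symm.ae_snd (measurableSet_singleton _) (ae_eq_integral_of_variance_eq_zero hX hvar)
  filter_upwards [ae_all_iff.2 hconst] with ω hω
  simp [hω]

theorem eventually_measureReal_sum_lt (hX : MemLp (X 0) 2 P) (hindep : iIndepFun X P)
    (hident : ∀ k, IdentDistrib (X k) (X 0) P P) {r c : ℝ} (hc : cdf (gaussianReal 0 1) r < c) :
    ∀ᶠ n : ℕ in atTop,
      P.real {ω | ∑ k ∈ Finset.range n, X k ω < n * P[X 0] + r * √Var[X 0; P] * √n} < c := by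
  have hXm (k : ℕ) : AEMeasurable (X k) P := (hident k).aemeasurable_fst
  set σ := √Var[X 0; P]
  have hc₀ : 0 < c := (cdf_nonneg _ r).trans_lt hc
  -- If `σ = 0`, the limit law in the central limit theorem is a point mass at the threshold.
  rcases (Real.sqrt_nonneg Var[X 0; P]).eq_or_lt with hσ₀ | hσ₀
  · have hvar : Var[X 0; P] = 0 := (Real.sqrt_eq_zero (variance_nonneg _ _)).1 hσ₀.symm
    refine .of_forall fun n ↦ ?_
    rw [measureReal_def, measure_eq_zero_iff_ae_notMem.2]
    · simpa using hc₀
    · filter_upwards [ae_sum_eq_mul_integral_of_variance_eq_zero hX hident hvar n] with ω hω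
      simp [hω, σ, ← hσ₀]
  have hlaw : HasLaw (σ * ·) (gaussianReal 0 Var[X 0; P].toNNReal) (gaussianReal 0 1) := by
    simpa only [Real.coe_toNNReal _ (variance_nonneg (X 0) P)] using
      hasLaw_sqrt_mul_gaussianReal Var[X 0; P].toNNReal
  have hlim := ProbabilityMeasure.limsup_measure_closed_le_of_tendsto
    (tendstoInDistribution_inv_sqrt_mul_sum_sub hlaw hX hindep hident).tendsto
    (isClosed_Iic (a := r * σ))
  have hc' : (gaussianReal 0 1).map (σ * ·) (Set.Iic (r * σ)) < ENNReal.ofReal c := by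
    rw [Measure.map_apply (by fun_prop) measurableSet_Iic,
      Set.preimage_const_mul_Iic₀ _ hσ₀, mul_div_cancel_right₀ _ hσ₀.ne', ← ofReal_cdf]
    exact (ENNReal.ofReal_lt_ofReal_iff hc₀).2 hc
  filter_upwards [eventually_lt_of_limsup_lt (hlim.trans_lt hc'), eventually_gt_atTop 0]
    with n hn hn₀
  have hn' : (0 : ℝ) < √n := by positivity
  rw [ProbabilityMeasure.coe_mk, Measure.map_apply_of_aemeasurable (by fun_prop)
    measurableSet_Iic] at hn
  refine (ENNReal.toReal_lt_of_lt_ofReal hn).trans_le' (measureReal_mono fun ω hω ↦ ?_)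
  rw [Set.mem_preimage, Set.mem_Iic, inv_mul_le_iff₀ hn']
  rw [Set.mem_ofPred_eq] at hω
  linarith

end Probability

section FiniteDistribution

open MeasureTheory ProbabilityTheory Filter

theorem measureReal_mem_eq_sum_prod {Ω ι κ : Type*} [MeasurableSpace Ω] [MeasurableSpace ι]
    [MeasurableSingletonClass ι] [Fintype κ] {P : Measure Ω} [IsProbabilityMeasure P]
    {Y : κ → Ω → ι} {μ : κ → Measure ι} [∀ k, IsProbabilityMeasure (μ k)]
    (hY : ∀ k, HasLaw (Y k) (μ k) P) (hindep : iIndepFun Y P) (S : Finset (κ → ι)) :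
    P.real {ω | (Y · ω) ∈ S} = ∑ i ∈ S, ∏ k, (μ k).real {i k} := by
  have hlaw := hindep.hasLaw_pi hY
  rw [hlaw.measureReal_eq (p := (· ∈ S)) S.measurableSet]
  calc (Measure.pi μ).real S = ∑ i ∈ S, (Measure.pi μ).real {i} := by simp
    _ = ∑ i ∈ S, ∏ k, (μ k).real {i k} := by
      simp [measureReal_def, Measure.pi_singleton, ENNReal.toReal_prod]

variable {ι : Type*} [Fintype ι] {p : ι → ℝ}

theorem exists_isProbabilityMeasure_real_singleton_eq [MeasurableSpace ι]
    [MeasurableSingletonClass ι] (hp : p ∈ stdSimplex ℝ ι) :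
    ∃ μ : Measure ι, IsProbabilityMeasure μ ∧ ∀ i, μ.real {i} = p i := by
  let q : PMF ι := PMF.ofFintype (fun i ↦ ENNReal.ofReal (p i)) (by
    rw [← ENNReal.ofReal_sum_of_nonneg fun i _ ↦ hp.1 i, hp.2, ENNReal.ofReal_one])
  refine ⟨q.toMeasure, inferInstance, fun i ↦ ?_⟩
  rw [measureReal_def, q.toMeasure_apply_singleton i (measurableSet_singleton i)]
  exact ENNReal.toReal_ofReal (hp.1 i)

theorem prod_mem_stdSimplex (hp : p ∈ stdSimplex ℝ ι) (n : ℕ) :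
    (fun i : Fin n → ι ↦ ∏ k, p (i k)) ∈ stdSimplex ℝ (Fin n → ι) := by
  refine ⟨fun i ↦ Finset.prod_nonneg fun k _ ↦ hp.1 _, ?_⟩
  rw [← Fintype.piFinset_univ, ← Finset.prod_univ_sum, hp.2, Finset.prod_const_one]

theorem eventually_sum_prod_lt (hp : p ∈ stdSimplex ℝ ι) {f : ι → ℝ} {μ σ r c : ℝ}
    (hμ : μ = ∑ i, p i * f i) (hσ : σ = √(∑ i, p i * (f i - μ) ^ 2))
    (hc : cdf (gaussianReal 0 1) r < c) :
    ∀ᶠ n : ℕ in atTop,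
      ∑ i : Fin n → ι with ∑ k, f (i k) < n * μ + r * σ * √n, ∏ k, p (i k) < c := by
  let _ : MeasurableSpace ι := ⊤
  obtain ⟨ν, _, hν⟩ := exists_isProbabilityMeasure_real_singleton_eq hp
  obtain ⟨Ω, _, P, Y, -, hY, hindep, _⟩ := exists_iid ℕ ν
  have hf : Measurable f := measurable_of_finite f
  have hexp (g : ι → ℝ) : ∫ ω, g (Y 0 ω) ∂P = ∑ i, p i * g i := by
    rw [← Function.comp_def g, (hY 0).integral_comp (by fun_prop), integral_fintype .of_finite]
    simp [hν]
  have hX : MemLp (f ∘ Y 0) 2 P := .comp_of_map .of_discrete (hY 0).aemeasurable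
  have hmean : P[f ∘ Y 0] = μ := (hexp f).trans hμ.symm
  have hstd : √Var[f ∘ Y 0; P] = σ := by
    rw [variance_eq_integral hX.aemeasurable, hmean, hσ]
    exact congrArg _ (hexp fun i ↦ (f i - μ) ^ 2)
  have htail := eventually_measureReal_sum_lt (X := fun k ↦ f ∘ Y k) hX
    (hindep.comp (fun _ ↦ f) fun _ ↦ hf) (fun k ↦ ((hY k).identDistrib (hY 0)).comp hf) hc
  filter_upwards [htail] with n hn
  rw [hmean, hstd] at hn
  refine hn.trans_eq' ?_
  simp_rw [← hν]
  rw [← measureReal_mem_eq_sum_prod (fun k : Fin n ↦ hY k) (hindep.precomp Fin.val_injective)]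
  simp [Finset.sum_range]

end FiniteDistribution

theorem prod_le_rpow_neg_of_le_sum_neg_logb {κ : Type*} {s : Finset κ} {p : κ → ℝ}
    (hp : ∀ k ∈ s, 0 ≤ p k) {b t : ℝ} (hb : 1 < b) (ht : t ≤ ∑ k ∈ s, -Real.logb b (p k)) :
    ∏ k ∈ s, p k ≤ b ^ (-t) := by
  have hb₀ : 0 < b := zero_lt_one.trans hb
  rcases (Finset.prod_nonneg hp).eq_or_lt with h₀ | hpos
  · rw [← h₀]
    positivity
  rw [← Real.logb_le_iff_le_rpow hb hpos,
    Real.logb_prod _ _ fun k hk ↦ Finset.prod_ne_zero_iff.1 hpos.ne' k hk]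
  rw [Finset.sum_neg_distrib] at ht
  exact le_neg_of_le_neg ht

theorem IsDensity.eigenvalues_mem_stdSimplex {ι : Type*} [Fintype ι] [DecidableEq ι]
    {ρ : Matrix ι ι ℂ} (hρ : IsDensity ρ) :
    hρ.1.isHermitian.eigenvalues ∈ stdSimplex ℝ ι := by
  refine ⟨hρ.1.eigenvalues_nonneg, ?_⟩
  simpa [← Complex.ofReal_sum] using hρ.1.isHermitian.trace_eq_sum_eigenvalues.symm.trans hρ.2

open ProbabilityTheory in
theorem sigDim_kronPow_lower_bound_general_general {ι : Type*} [Fintype ι] [DecidableEq ι]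
    (ρ : Matrix ι ι ℂ) (hρ : IsDensity ρ) (E α : ℝ)
    (hE : E = -∑ i, hρ.1.isHermitian.eigenvalues i *
        Real.logb 2 (hρ.1.isHermitian.eigenvalues i))
    (hα : α = Real.sqrt (∑ i, hρ.1.isHermitian.eigenvalues i *
        (Real.logb 2 (hρ.1.isHermitian.eigenvalues i) + E) ^ 2))
    (r : ℝ) {δ C : ℝ} (hδ : δ ≤ 1) (hC : C < δ - cdf (gaussianReal 0 1) r) :
    ∀ᶠ n : ℕ in Filter.atTop,
      C * (2 : ℝ) ^ ((n : ℝ) * E + r * α * Real.sqrt n) < (sigDim (kronPow ρ n) δ : ℝ) := by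
  set p := hρ.1.isHermitian.eigenvalues
  have hp : p ∈ stdSimplex ℝ ι := hρ.eigenvalues_mem_stdSimplex
  have htail := eventually_sum_prod_lt hp (f := fun i ↦ -Real.logb 2 (p i)) (μ := E) (σ := α)
    (by simp [hE]) (by rw [hα]; congr! 3; ring) (lt_sub_comm.1 hC)
  filter_upwards [htail] with n hn
  set t := n * E + r * α * √n
  have hpn := prod_mem_stdSimplex hp n
  have hle := le_mul_sigDim_diagonal_add_sum hpn.1 (hδ.trans_eq hpn.2.symm) (b := 2 ^ (-t))
    (by positivity) (S := {i | ∑ k, -Real.logb 2 (p (i k)) < t}) fun i hi ↦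
      prod_le_rpow_neg_of_le_sum_neg_logb (fun k _ ↦ hp.1 _) one_lt_two (by simpa using hi)
  rw [sigDim_kronPow_eq_sigDim_diagonal hρ.1.isHermitian, ← lt_div_iff₀ (by positivity),
    div_eq_inv_mul, ← Real.rpow_neg zero_le_two]
  linarith

/-- for a density matrix `ρ` with entropy `E` and spectral deviation `α > 0`,
for every `r > 0` there exist `δ_r < 1`, `C > 0` and `n₀` such that for all `n ≥ n₀`,
`𝒮(ρ^{⊗n}, δ_r) > C · 2^{nE + rα√n}`. -/
theorem sigDim_kronPow_lower_bound_general {ι : Type*} [Fintype ι] [DecidableEq ι] [Nonempty ι]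
    (ρ : Matrix ι ι ℂ) (hρ : IsDensity ρ)
    (E α β : ℝ)
    (hE : E = -∑ i, hρ.1.isHermitian.eigenvalues i *
        Real.logb 2 (hρ.1.isHermitian.eigenvalues i))
    (hα : α = Real.sqrt (∑ i, hρ.1.isHermitian.eigenvalues i *
        (Real.logb 2 (hρ.1.isHermitian.eigenvalues i) + E) ^ 2))
    (hβ : β = ∑ i, hρ.1.isHermitian.eigenvalues i *
        |Real.logb 2 (hρ.1.isHermitian.eigenvalues i) + E| ^ 3)
    (hαpos : 0 < α)
    (r : ℝ) (hr : 0 < r) :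
    ∃ δr C : ℝ, ∃ n₀ : ℕ, δr < 1 ∧ 0 < C ∧
      ∀ n : ℕ, n₀ ≤ n →
        C * (2 : ℝ) ^ ((n : ℝ) * E + r * α * Real.sqrt n) < (sigDim (kronPow ρ n) δr : ℝ) := by
  obtain ⟨δr, hδ, hδ1⟩ := exists_between (cdf_gaussianReal_lt_one 0 one_ne_zero r)
  obtain ⟨C, hC0, hC⟩ := exists_between (sub_pos.2 hδ)
  obtain ⟨n₀, hn₀⟩ := Filter.eventually_atTop.1 <|
    sigDim_kronPow_lower_bound_general_general ρ hρ E α hE hα r hδ1.le hC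
  exact ⟨δr, C, n₀, hδ1, hC0, hn₀⟩
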